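/- Let 0 < δ < 1 and ε > 0, and assume Σ_{i=1}^d A_{i,i}² > 0. If the sample size N (a positive integer) satisfies N ≥ (1/(4εδ)) · [ (4d + 16)(tr(A))² + (d + 8)‖A + Aᵀ‖² + 20 Σ_{i=1}^d A_{i,i}² ] / ( Σ_{i=1}^d A_{i,i}² ), then with probability at least 1 − δ the estimator satisfies ‖g − diag(A)‖² ≤ ε · Σ_{i=1}^d A_{i,i}², where diag(A) = (A_{1,1},…,A_{d,d}) ∈ ℝ^d and ‖·‖ is the Euclidean norm on ℝ^d. -/

import Mathlib

open MeasureTheory ProbabilityTheory Finset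

noncomputable def stdGaussianVec (d : ℕ) : Measure (Fin d → ℝ) :=
  Measure.pi fun _ => gaussianReal 0 1

def quadForm {d : ℕ} (A : Matrix (Fin d) (Fin d) ℝ) (u : Fin d → ℝ) : ℝ :=
  ∑ i, ∑ j, A i j * u i * u j

/-!
Gaussian integration by parts, `E[uᵢ P(u)] = E[∂ᵢ P(u)]`, applied twice gives
`E[(uₚ² - 1) P(u)] = E[∂ₚ² P(u)]`. For the quadratic form `Q` of `A` this shows that
`(uₚ² - 1) Q(u) / 2` is an unbiased estimator of `A p p`. Its second moment reduces in the same way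
to `E[∂ₚ⁴ Q²]`, `E[∂ₚ² Q²]` and `E[Q²]`, where `∂ₚ Q` is the linear form given by row `p` of
`A + Aᵀ`, so no eighth-order moment has to be expanded. Averaging `N` independent copies divides
the summed variance by `N`, and Markov's inequality for the squared error concludes.
-/

open MvPolynomial
open scoped NNReal Matrix

section SteinIdentity

variable {m : ℝ} {v : ℝ≥0}

lemma hasDerivAt_gaussianPDFReal (m : ℝ) (v : ℝ≥0) (x : ℝ) :
    HasDerivAt (gaussianPDFReal m v) (-((x - m) / v) * gaussianPDFReal m v x) x := by
  have exponent_deriv : HasDerivAt (fun y : ℝ => -(y - m) ^ 2 / (2 * (v : ℝ))) (-((x - m) / v)) x :=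
    ((((hasDerivAt_id x).sub_const m).pow 2).neg.div_const (2 * (v : ℝ))).congr_deriv (by
      simp only [id, Nat.cast_ofNat]
      ring)
  rw [gaussianPDFReal_def]
  exact (exponent_deriv.exp.const_mul _).congr_deriv (by ring)

lemma integrable_gaussianReal_iff_integrable_mul_pdf (hv : v ≠ 0) {f : ℝ → ℝ} :
    Integrable f (gaussianReal m v) ↔ Integrable (fun x => f x * gaussianPDFReal m v x) := by
  rw [gaussianReal_of_var_ne_zero m hv,
    integrable_withDensity_iff_integrable_smul' (measurable_gaussianPDF m v)
      (ae_of_all _ fun _ => gaussianPDF_lt_top)]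
  simp only [toReal_gaussianPDF, smul_eq_mul, mul_comm]

lemma integral_gaussianReal_eq_integral_mul_pdf (hv : v ≠ 0) (f : ℝ → ℝ) :
    ∫ x, f x ∂gaussianReal m v = ∫ x, f x * gaussianPDFReal m v x := by
  simp only [integral_gaussianReal_eq_integral_smul hv, smul_eq_mul, mul_comm]

theorem integral_sub_mul_gaussianReal {f f' : ℝ → ℝ} (hderiv : ∀ x, HasDerivAt f (f' x) x)
    (hf : Integrable f (gaussianReal m v)) (hf' : Integrable f' (gaussianReal m v))
    (hxf : Integrable (fun x => (x - m) * f x) (gaussianReal m v)) :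
    ∫ x, (x - m) * f x ∂gaussianReal m v = v * ∫ x, f' x ∂gaussianReal m v := by
  rcases eq_or_ne v 0 with rfl | hv
  · simp [gaussianReal_zero_var]
  have hv' : (v : ℝ) ≠ 0 := by exact_mod_cast hv
  rw [integrable_gaussianReal_iff_integrable_mul_pdf hv] at hf hf' hxf
  have rescale : ∀ x, f x * (-((x - m) / v) * gaussianPDFReal m v x) =
      -(v : ℝ)⁻¹ * ((x - m) * f x * gaussianPDFReal m v x) := fun x => by ring
  have by_parts := integral_mul_deriv_eq_deriv_mul_of_integrable
    (fun x _ => hderiv x) (fun x _ => hasDerivAt_gaussianPDFReal m v x)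
    ((hxf.const_mul (-(v : ℝ)⁻¹)).congr (ae_of_all _ fun x => (rescale x).symm)) hf' hf
  simp_rw [rescale, integral_const_mul] at by_parts
  simp only [integral_gaussianReal_eq_integral_mul_pdf hv]
  field_simp at by_parts
  linarith

lemma integrable_pow_gaussianReal (m : ℝ) (v : ℝ≥0) (n : ℕ) :
    Integrable (fun x : ℝ => x ^ n) (gaussianReal m v) := by
  have hmem : MemLp id n (gaussianReal m v) := by exact_mod_cast memLp_id_gaussianReal (n : ℝ≥0)
  refine hmem.integrable_norm_pow'.mono' (by fun_prop) (ae_of_all _ fun x => ?_)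
  simp

lemma integral_pow_succ_stdGaussian (n : ℕ) :
    ∫ x, x ^ (n + 1) ∂gaussianReal 0 1 = n * ∫ x, x ^ (n - 1) ∂gaussianReal 0 1 := by
  have stein := integral_sub_mul_gaussianReal (m := 0) (v := 1) (fun x => hasDerivAt_pow n x)
    (integrable_pow_gaussianReal 0 1 n)
    ((integrable_pow_gaussianReal 0 1 (n - 1)).const_mul _)
    (by simpa only [sub_zero, ← pow_succ'] using integrable_pow_gaussianReal 0 1 (n + 1))
  simpa only [sub_zero, ← pow_succ', NNReal.coe_one, one_mul, integral_const_mul] using stein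

end SteinIdentity

section GaussianExpectation

variable {ι : Type*} [Fintype ι]

variable (ι) in
/-- The standard Gaussian measure on `ι → ℝ`; `stdGaussianVec d` is `stdGaussianPi (Fin d)`. -/
noncomputable abbrev stdGaussianPi : Measure (ι → ℝ) :=
  Measure.pi fun _ => gaussianReal 0 1

lemma eval_monomial_eq_prod {R : Type*} [CommSemiring R] (s : ι →₀ ℕ) (a : R) (u : ι → R) :
    eval u (monomial s a) = a * ∏ i, u i ^ s i := by
  rw [eval_monomial, Finsupp.prod_fintype _ _ fun _ => pow_zero _]

lemma integrable_eval_stdGaussianPi (P : MvPolynomial ι ℝ) :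
    Integrable (fun u => eval u P) (stdGaussianPi ι) := by
  induction P using MvPolynomial.induction_on' with
  | monomial s a =>
    simp only [eval_monomial_eq_prod]
    exact (Integrable.fintype_prod fun i =>
      integrable_pow_gaussianReal 0 1 (s i)).const_mul a
  | add P Q hP hQ =>
    simp only [map_add]
    exact hP.add hQ

lemma memLp_two_eval_stdGaussianPi (P : MvPolynomial ι ℝ) :
    MemLp (fun u => eval u P) 2 (stdGaussianPi ι) := by
  rw [memLp_two_iff_integrable_sq (integrable_eval_stdGaussianPi P).1]
  simp only [← map_pow]
  exact integrable_eval_stdGaussianPi (P ^ 2)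

/-- Expectation of a polynomial in i.i.d. standard Gaussian variables, as a linear functional on
polynomials: all integrability is settled here, and moments become algebra with `pderiv`. -/
noncomputable def gaussianExpectation : MvPolynomial ι ℝ →ₗ[ℝ] ℝ where
  toFun P := ∫ u, eval u P ∂stdGaussianPi ι
  map_add' P Q := by
    simp only [map_add]
    exact integral_add (integrable_eval_stdGaussianPi P) (integrable_eval_stdGaussianPi Q)
  map_smul' c P := by simp only [smul_eval, integral_const_mul, RingHom.id_apply, smul_eq_mul]

namespace gaussianExpectation

lemma apply_eq (P : MvPolynomial ι ℝ) :
    gaussianExpectation P = ∫ u, eval u P ∂stdGaussianPi ι := rfl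

lemma map_C_mul (c : ℝ) (P : MvPolynomial ι ℝ) :
    gaussianExpectation (C c * P) = c * gaussianExpectation P := by
  rw [C_mul', map_smul, smul_eq_mul]

lemma map_C (c : ℝ) : gaussianExpectation (C c : MvPolynomial ι ℝ) = c := by
  simp [apply_eq]

lemma map_monomial (s : ι →₀ ℕ) (a : ℝ) :
    gaussianExpectation (monomial s a) = a * ∏ i, ∫ x, x ^ s i ∂gaussianReal 0 1 := by
  simp only [apply_eq, eval_monomial_eq_prod, integral_const_mul]
  rw [integral_fintype_prod_eq_prod fun i (x : ℝ) => x ^ s i]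

theorem map_X_mul (i : ι) (P : MvPolynomial ι ℝ) :
    gaussianExpectation (X i * P) = gaussianExpectation (pderiv i P) := by
  classical
  induction P using MvPolynomial.induction_on' with
  | add P Q hP hQ => simp only [mul_add, map_add, hP, hQ]
  | monomial s a =>
    have other_factors (t : ι →₀ ℕ) (ht : ∀ j ≠ i, t j = s j) :
        ∏ j ∈ univ.erase i, ∫ x, x ^ t j ∂gaussianReal 0 1 =
          ∏ j ∈ univ.erase i, ∫ x, x ^ s j ∂gaussianReal 0 1 :=
      prod_congr rfl fun j hj => by rw [ht j (ne_of_mem_erase hj)]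
    rw [X, monomial_mul, one_mul, pderiv_monomial, map_monomial, map_monomial,
      ← mul_prod_erase univ _ (mem_univ i), ← mul_prod_erase univ _ (mem_univ i),
      other_factors (Finsupp.single i 1 + s) fun j hj => by simp [hj.symm],
      other_factors (s - Finsupp.single i 1) fun j hj => by simp [hj.symm]]
    simp only [Finsupp.add_apply, Finsupp.tsub_apply, Finsupp.single_eq_same, add_comm 1,
      integral_pow_succ_stdGaussian]
    ring

theorem map_sq_sub_one_mul (i : ι) (P : MvPolynomial ι ℝ) :
    gaussianExpectation ((X i ^ 2 - 1) * P) = gaussianExpectation (pderiv i (pderiv i P)) := by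
  rw [show (X i ^ 2 - 1) * P = X i * (X i * P) - P by ring, map_sub, map_X_mul, pderiv_mul,
    pderiv_X_self, one_mul, map_add, map_X_mul]
  ring

-- In Hermite polynomials, `(x ^ 2 - 1) ^ 2 = H₄ + 4 H₂ + 2`, and `Hₙ (X i) * P` has the same
-- expectation as the `n`-th derivative of `P`.
theorem map_sq_sub_one_sq_mul (i : ι) (P : MvPolynomial ι ℝ) :
    gaussianExpectation ((X i ^ 2 - 1) ^ 2 * P) =
      gaussianExpectation ((pderiv i)^[4] P) + 4 * gaussianExpectation ((pderiv i)^[2] P)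
        + 2 * gaussianExpectation P := by
  have leibniz : pderiv i (pderiv i ((X i ^ 2 - 1) * P)) =
      C 2 * P + C 4 * (X i * pderiv i P) + (X i ^ 2 - 1) * pderiv i (pderiv i P) := by
    simp only [sq, pderiv_mul, pderiv_X_self, map_sub, map_add, pderiv_one, map_zero,
      map_ofNat]
    ring
  rw [sq (X i ^ 2 - 1), mul_assoc, map_sq_sub_one_mul, leibniz, map_add, map_add, map_C_mul,
    map_C_mul, map_X_mul, map_sq_sub_one_mul]
  simp only [Function.iterate_succ_apply, Function.iterate_zero_apply]
  ring

lemma map_toMvPolynomial_mul {κ : Type*} (M : Matrix κ ι ℝ) (i : κ) (P : MvPolynomial ι ℝ) :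
    gaussianExpectation (M.toMvPolynomial i * P) =
      ∑ j, M i j * gaussianExpectation (pderiv j P) := by
  simp only [Matrix.toMvPolynomial, ← C_mul_X_eq_monomial, sum_mul, map_sum, mul_assoc, map_C_mul,
    map_X_mul]

lemma variance_eval (P : MvPolynomial ι ℝ) :
    Var[fun u => eval u P; stdGaussianPi ι] =
      gaussianExpectation (P ^ 2) - gaussianExpectation P ^ 2 := by
  rw [variance_eq_sub (memLp_two_eval_stdGaussianPi P)]
  simp only [apply_eq, map_pow, Pi.pow_apply]

end gaussianExpectation

end GaussianExpectation

section QuadraticForm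

variable {ι R : Type*} [Fintype ι] [CommSemiring R]

/-- The quadratic form `∑ i j, A i j * X i * X j` as a polynomial, written through the linear
forms `A.toMvPolynomial i` so that its derivatives are again such linear forms. -/
noncomputable def quadFormPoly (A : Matrix ι ι R) : MvPolynomial ι R :=
  ∑ i, X i * A.toMvPolynomial i

lemma eval_quadFormPoly {d : ℕ} (A : Matrix (Fin d) (Fin d) ℝ) (u : Fin d → ℝ) :
    eval u (quadFormPoly A) = quadForm A u := by
  simp only [quadFormPoly, quadForm, map_sum, map_mul, eval_X,
    Matrix.toMvPolynomial_eval_eq_apply, Matrix.mulVec, dotProduct, mul_sum]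
  exact sum_congr rfl fun i _ => sum_congr rfl fun j _ => by ring

lemma pderiv_toMvPolynomial {κ : Type*} (M : Matrix κ ι R) (i : κ) (j : ι) :
    pderiv j (M.toMvPolynomial i) = C (M i j) := by
  classical
  simp [Matrix.toMvPolynomial, ← C_mul_X_eq_monomial, Pi.single_apply]

lemma pderiv_quadFormPoly (A : Matrix ι ι R) (p : ι) :
    pderiv p (quadFormPoly A) = (A + Aᵀ).toMvPolynomial p := by
  classical
  simp only [quadFormPoly, map_sum, pderiv_mul, pderiv_X, Pi.single_apply, pderiv_toMvPolynomial,
    sum_add_distrib, ite_mul, one_mul, zero_mul, sum_ite_eq', mem_univ, if_true,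
    Matrix.toMvPolynomial_add, Pi.add_apply]
  simp only [Matrix.toMvPolynomial, ← C_mul_X_eq_monomial, Matrix.transpose_apply, mul_comm]

lemma pderiv_iterate_two_quadFormPoly_sq (A : Matrix ι ι R) (p : ι) :
    (pderiv p)^[2] (quadFormPoly A ^ 2) =
      C 2 * ((A + Aᵀ).toMvPolynomial p * (A + Aᵀ).toMvPolynomial p)
        + C (4 * A p p) * quadFormPoly A := by
  simp only [Function.iterate_succ_apply, Function.iterate_zero_apply, sq, map_add, pderiv_mul,
    pderiv_quadFormPoly, pderiv_toMvPolynomial, Matrix.add_apply, Matrix.transpose_apply, map_mul,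
    map_ofNat]
  ring

lemma pderiv_iterate_four_quadFormPoly_sq (A : Matrix ι ι R) (p : ι) :
    (pderiv p)^[4] (quadFormPoly A ^ 2) = C (24 * A p p ^ 2) := by
  rw [show 4 = 2 + 2 from rfl, Function.iterate_add_apply, pderiv_iterate_two_quadFormPoly_sq]
  simp only [Function.iterate_succ_apply, Function.iterate_zero_apply, map_add, pderiv_mul,
    pderiv_C, map_zero, pderiv_quadFormPoly, pderiv_toMvPolynomial, Matrix.add_apply,
    Matrix.transpose_apply]
  simp only [map_mul, map_pow, map_ofNat]
  ring

lemma two_mul_sum_mul_add_transpose (A : Matrix ι ι R) :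
    2 * ∑ i, ∑ j, A i j * (A i j + A j i) = ∑ i, ∑ j, (A i j + A j i) ^ 2 := by
  have symmetrize : ∑ i, ∑ j, A i j * (A i j + A j i) = ∑ i, ∑ j, A j i * (A i j + A j i) := by
    rw [sum_comm]
    simp only [add_comm]
  rw [two_mul]
  nth_rw 2 [symmetrize]
  simp only [← sum_add_distrib, ← add_mul, sq]

end QuadraticForm

section DiagonalEstimator

variable {ι : Type*} [Fintype ι] (A : Matrix ι ι ℝ) (p : ι)

lemma gaussianExpectation_quadFormPoly :
    gaussianExpectation (quadFormPoly A) = A.trace := by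
  simp only [quadFormPoly, map_sum, gaussianExpectation.map_X_mul, pderiv_toMvPolynomial,
    gaussianExpectation.map_C, Matrix.trace, Matrix.diag_apply]

lemma gaussianExpectation_toMvPolynomial_mul_self {κ : Type*} (M : Matrix κ ι ℝ) (i : κ) :
    gaussianExpectation (M.toMvPolynomial i * M.toMvPolynomial i) = ∑ j, M i j ^ 2 := by
  simp only [gaussianExpectation.map_toMvPolynomial_mul, pderiv_toMvPolynomial,
    gaussianExpectation.map_C, sq]

lemma gaussianExpectation_quadFormPoly_sq :
    gaussianExpectation (quadFormPoly A ^ 2) =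
      A.trace ^ 2 + (∑ i, ∑ j, (A i j + A j i) ^ 2) / 2 := by
  have stein (i : ι) : gaussianExpectation (X i * (A.toMvPolynomial i * quadFormPoly A)) =
      A i i * A.trace + ∑ j, A i j * (A i j + A j i) := by
    rw [gaussianExpectation.map_X_mul, pderiv_mul, pderiv_toMvPolynomial, pderiv_quadFormPoly,
      map_add, gaussianExpectation.map_C_mul, gaussianExpectation_quadFormPoly,
      gaussianExpectation.map_toMvPolynomial_mul]
    simp only [pderiv_toMvPolynomial, gaussianExpectation.map_C, Matrix.add_apply,
      Matrix.transpose_apply]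
  rw [sq, quadFormPoly, sum_mul, map_sum, ← quadFormPoly]
  simp only [mul_assoc, stein, sum_add_distrib, ← sum_mul]
  rw [← two_mul_sum_mul_add_transpose]
  simp only [Matrix.trace, Matrix.diag_apply]
  ring

/-- The single-sample estimator `uᵀAu * (u p ^ 2 - 1) / 2` of `A p p`, as a polynomial in `u`. -/
noncomputable def diagEstimatorPoly : MvPolynomial ι ℝ :=
  C (1 / 2) * ((X p ^ 2 - 1) * quadFormPoly A)

lemma gaussianExpectation_diagEstimatorPoly :
    gaussianExpectation (diagEstimatorPoly A p) = A p p := by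
  rw [diagEstimatorPoly, gaussianExpectation.map_C_mul, gaussianExpectation.map_sq_sub_one_mul,
    pderiv_quadFormPoly, pderiv_toMvPolynomial, gaussianExpectation.map_C, Matrix.add_apply,
    Matrix.transpose_apply]
  ring

lemma gaussianExpectation_diagEstimatorPoly_sq :
    gaussianExpectation (diagEstimatorPoly A p ^ 2) =
      6 * A p p ^ 2 + 4 * A p p * A.trace + 2 * ∑ j, (A p j + A j p) ^ 2
        + A.trace ^ 2 / 2 + (∑ i, ∑ j, (A i j + A j i) ^ 2) / 4 := by
  rw [diagEstimatorPoly, mul_pow, mul_pow, ← C_pow, gaussianExpectation.map_C_mul,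
    gaussianExpectation.map_sq_sub_one_sq_mul, pderiv_iterate_four_quadFormPoly_sq,
    pderiv_iterate_two_quadFormPoly_sq, map_add, gaussianExpectation.map_C,
    gaussianExpectation.map_C_mul, gaussianExpectation.map_C_mul,
    gaussianExpectation_toMvPolynomial_mul_self, gaussianExpectation_quadFormPoly,
    gaussianExpectation_quadFormPoly_sq]
  simp only [Matrix.add_apply, Matrix.transpose_apply]
  ring

theorem sum_variance_diagEstimatorPoly :
    ∑ p, Var[fun u => eval u (diagEstimatorPoly A p); stdGaussianPi ι] =
      ((2 * (Fintype.card ι : ℝ) + 16) * (∑ i, A i i) ^ 2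
        + ((Fintype.card ι : ℝ) + 8) * (∑ i, ∑ j, (A i j + A j i) ^ 2)
        + 20 * ∑ i, A i i ^ 2) / 4 := by
  simp only [gaussianExpectation.variance_eval, gaussianExpectation_diagEstimatorPoly_sq,
    gaussianExpectation_diagEstimatorPoly, Matrix.trace, Matrix.diag_apply, sum_sub_distrib,
    sum_add_distrib, ← mul_sum, ← sum_mul, sum_const, card_univ, nsmul_eq_mul]
  ring

end DiagonalEstimator

lemma one_sub_le_measure_le_of_integral_le {Ω : Type*} [MeasurableSpace Ω]
    {μ : Measure Ω} [IsProbabilityMeasure μ] {Z : Ω → ℝ} (hZ₀ : 0 ≤ᵐ[μ] Z) (hZ : Integrable Z μ)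
    {δ η : ℝ} (hη : 0 < η) (hint : ∫ x, Z x ∂μ ≤ η * δ) :
    ENNReal.ofReal (1 - δ) ≤ μ {x | Z x ≤ η} := by
  have markov : μ.real {x | η ≤ Z x} ≤ δ :=
    le_of_mul_le_mul_left ((mul_meas_ge_le_integral_of_nonneg hZ₀ hZ η).trans hint) hη
  have compl_le : μ.real {x | Z x ≤ η}ᶜ ≤ μ.real {x | η ≤ Z x} :=
    measureReal_mono fun x (hx : ¬Z x ≤ η) => (not_le.1 hx).le
  rw [probReal_compl_eq_one_sub₀ (nullMeasurableSet_le hZ.1.aemeasurable aemeasurable_const)]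
    at compl_le
  rw [← ofReal_measureReal]
  exact ENNReal.ofReal_le_ofReal (by linarith)

section SampleMean

variable {Ω κ : Type*} [MeasurableSpace Ω] [Fintype κ]

/-- The empirical mean of `X` over the sample `w`. -/
noncomputable def sampleMean (X : Ω → ℝ) (w : κ → Ω) : ℝ :=
  (Fintype.card κ : ℝ)⁻¹ * ∑ j, X (w j)

variable {μ : Measure Ω} [IsProbabilityMeasure μ] {X : Ω → ℝ}

lemma memLp_sampleMean (hX : MemLp X 2 μ) :
    MemLp (sampleMean X) 2 (Measure.pi fun _ : κ => μ) :=
  (memLp_finsetSum _ fun j _ =>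
    hX.comp_measurePreserving (measurePreserving_eval (fun _ => μ) j)).const_mul _

lemma integrable_sq_sampleMean_sub (hX : MemLp X 2 μ) (c : ℝ) :
    Integrable (fun w => (sampleMean X w - c) ^ 2) (Measure.pi fun _ : κ => μ) :=
  ((memLp_sampleMean hX).sub (memLp_const c)).integrable_sq

variable [Nonempty κ]

lemma integral_sampleMean (hX : Integrable X μ) :
    ∫ w, sampleMean X w ∂(Measure.pi fun _ : κ => μ) = ∫ x, X x ∂μ := by
  have integral_coord (j : κ) : ∫ w, X (w j) ∂(Measure.pi fun _ : κ => μ) = ∫ x, X x ∂μ :=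
    integral_comp_eval hX.1
  simp only [sampleMean]
  rw [integral_const_mul, integral_finsetSum _ fun j _ => integrable_comp_eval hX]
  simp [integral_coord]

lemma variance_sampleMean (hX : MemLp X 2 μ) :
    Var[sampleMean X; Measure.pi fun _ : κ => μ] = Var[X; μ] / Fintype.card κ := by
  have variance_sum := variance_sum_pi (μ := fun _ : κ => μ) (X := fun _ => X) fun _ => hX
  rw [sum_const, card_univ, nsmul_eq_mul] at variance_sum
  have sampleMean_eq : (sampleMean X : (κ → Ω) → ℝ) =
      fun w => (Fintype.card κ : ℝ)⁻¹ * (∑ j, fun w => X (w j)) w := by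
    ext w
    simp only [sampleMean, Finset.sum_apply]
  rw [sampleMean_eq, variance_const_mul, variance_sum]
  field_simp

lemma integral_sq_sampleMean_sub (hX : MemLp X 2 μ) :
    ∫ w, (sampleMean X w - ∫ x, X x ∂μ) ^ 2 ∂(Measure.pi fun _ : κ => μ) =
      Var[X; μ] / Fintype.card κ := by
  rw [← variance_sampleMean hX, variance_eq_integral (memLp_sampleMean hX).1.aemeasurable,
    integral_sampleMean (hX.integrable one_le_two)]

theorem one_sub_le_measure_sum_sq_sampleMean_sub_le {ι : Type*} [Fintype ι] {X : ι → Ω → ℝ}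
    (hX : ∀ p, MemLp (X p) 2 μ) {δ η : ℝ} (hη : 0 < η)
    (hvar : ∑ p, Var[X p; μ] ≤ η * δ * Fintype.card κ) :
    ENNReal.ofReal (1 - δ) ≤ (Measure.pi fun _ : κ => μ)
      {w | ∑ p, (sampleMean (X p) w - ∫ x, X p x ∂μ) ^ 2 ≤ η} := by
  refine one_sub_le_measure_le_of_integral_le
    (ae_of_all _ fun w => sum_nonneg fun p _ => sq_nonneg _)
    (integrable_finsetSum _ fun p _ => integrable_sq_sampleMean_sub (hX p) _) hη ?_
  rw [integral_finsetSum _ fun p _ => integrable_sq_sampleMean_sub (hX p) _]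
  simp only [integral_sq_sampleMean_sub (hX _), ← sum_div]
  exact (div_le_iff₀ (by positivity)).2 hvar

end SampleMean

lemma sampleMean_diagEstimatorPoly {d : ℕ} (A : Matrix (Fin d) (Fin d) ℝ) (p : Fin d) {N : ℕ}
    (w : Fin N → Fin d → ℝ) :
    sampleMean (fun u => eval u (diagEstimatorPoly A p)) w =
      1 / (2 * (N : ℝ)) * ∑ j, quadForm A (w j) * ((w j p) ^ 2 - 1) := by
  simp only [sampleMean, diagEstimatorPoly, map_mul, map_sub, map_pow, map_one, eval_C, eval_X,
    eval_quadFormPoly, Fintype.card_fin, ← mul_sum, mul_comm (quadForm A _)]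
  ring

theorem normwise_sample_complexity_general {d : ℕ} (A : Matrix (Fin d) (Fin d) ℝ)
    (δ ε : ℝ) (hδ0 : 0 < δ) (hε : 0 < ε) (hA : 0 < ∑ i, (A i i) ^ 2) (N : ℕ)
    (hNge : (1 / (4 * ε * δ)) *
        (((2 * (d : ℝ) + 16) * (∑ i, A i i) ^ 2
          + ((d : ℝ) + 8) * (∑ i, ∑ j, (A i j + A j i) ^ 2)
          + 20 * ∑ i, (A i i) ^ 2) / (∑ i, (A i i) ^ 2)) ≤ N) :
    ENNReal.ofReal (1 - δ) ≤
      (Measure.pi fun _ : Fin N => stdGaussianVec d)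
        {w | ∑ p, ((1 / (2 * (N : ℝ))) *
                (∑ j, quadForm A (w j) * ((w j p) ^ 2 - 1)) - A p p) ^ 2
              ≤ ε * ∑ i, (A i i) ^ 2} := by
  have hN : (0 : ℝ) < N := hNge.trans_lt' (by positivity)
  have : Nonempty (Fin N) := Fin.pos_iff_nonempty.1 (Nat.cast_pos.1 hN)
  have hvar : ∑ p, Var[fun u => eval u (diagEstimatorPoly A p); stdGaussianPi (Fin d)] ≤
      (ε * ∑ i, A i i ^ 2) * δ * Fintype.card (Fin N) := by
    rw [sum_variance_diagEstimatorPoly, Fintype.card_fin, Fintype.card_fin]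
    rw [one_div, ← div_eq_inv_mul, div_div, div_le_iff₀ (by positivity)] at hNge
    linarith
  simpa only [stdGaussianVec, sampleMean_diagEstimatorPoly, ← gaussianExpectation.apply_eq,
    gaussianExpectation_diagEstimatorPoly] using
    one_sub_le_measure_sum_sq_sampleMean_sub_le (κ := Fin N)
      (fun p => memLp_two_eval_stdGaussianPi (diagEstimatorPoly A p)) (mul_pos hε hA) hvar

theorem normwise_sample_complexity {d : ℕ} (hd : 1 ≤ d)
    (A : Matrix (Fin d) (Fin d) ℝ)
    (δ ε : ℝ) (hδ0 : 0 < δ) (hδ1 : δ < 1) (hε : 0 < ε)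
    (hA : 0 < ∑ i, (A i i) ^ 2)
    (N : ℕ) (hN : 0 < N)
    (hNge : (N : ℝ) ≥
      (1 / (4 * ε * δ)) *
        (((4 * (d : ℝ) + 16) * (∑ i, A i i) ^ 2
          + ((d : ℝ) + 8) * (∑ i, ∑ j, (A i j + A j i) ^ 2)
          + 20 * ∑ i, (A i i) ^ 2) / (∑ i, (A i i) ^ 2))) :
    ENNReal.ofReal (1 - δ) ≤
      (Measure.pi fun _ : Fin N => stdGaussianVec d)
        {w | ∑ p, ((1 / (2 * (N : ℝ))) *
                (∑ j, quadForm A (w j) * ((w j p) ^ 2 - 1)) - A p p) ^ 2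
              ≤ ε * ∑ i, (A i i) ^ 2} := by
  refine normwise_sample_complexity_general A δ ε hδ0 hε hA N (le_trans ?_ hNge)
  gcongr
  norm_num
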